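/- Let ν > 0, Δt > 0, λ > 0, σ := √(λ² + 1/ν), C₁ := −ν⁻¹·sinh(σΔt)/(σ·cosh(σΔt) + λ·sinh(σΔt)) and C₂ := σ/(σ·cosh(σΔt) + λ·sinh(σΔt)). Since C₁ ≠ 0 for these positive parameters, the complement ℂ \ Φ of the set Φ := {C₂·cos(θ) + ε·i·√(C₂²·sin²(θ) + ν·C₁²) : θ ∈ [−π, π], ε ∈ {−1, +1}} is a connected subset of ℂ; that is, Φ does not disconnect the complex plane. -/

import Mathlib

noncomputable section

/-- σ := √(λ² + 1/ν). -/
def sig (ν lam : ℝ) : ℝ := Real.sqrt (lam ^ 2 + 1 / ν)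

/-- C₁ := −ν⁻¹·sinh(σΔt)/(σ·cosh(σΔt) + λ·sinh(σΔt)). -/
def C1 (ν Δt lam : ℝ) : ℝ :=
  -(ν⁻¹ * Real.sinh (sig ν lam * Δt)) /
    (sig ν lam * Real.cosh (sig ν lam * Δt) + lam * Real.sinh (sig ν lam * Δt))

/-- C₂ := σ/(σ·cosh(σΔt) + λ·sinh(σΔt)). -/
def C2 (ν Δt lam : ℝ) : ℝ :=
  sig ν lam /
    (sig ν lam * Real.cosh (sig ν lam * Δt) + lam * Real.sinh (sig ν lam * Δt))

/-- The limit spectrum Φ: the two closed curves θ ↦ C₂ cos θ ± i √(C₂² sin²θ + ν C₁²). -/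
def PhiSet (ν Δt lam : ℝ) : Set ℂ :=
  {z : ℂ | ∃ θ ∈ Set.Icc (-Real.pi) Real.pi, ∃ ε : ℝ, (ε = 1 ∨ ε = -1) ∧
    z = (C2 ν Δt lam * Real.cos θ : ℝ) + (ε : ℂ) * Complex.I *
          (Real.sqrt (C2 ν Δt lam ^ 2 * Real.sin θ ^ 2 + ν * C1 ν Δt lam ^ 2) : ℝ)}

/-!
`Φ` lies on a circle about the origin, since `(C₂ cos θ)² + (C₂² sin² θ + ν C₁²) = C₂² + ν C₁²`. As
`C₁ ≠ 0`, no point of `Φ` is real, so `Φ` misses a point of that circle. Through the missed point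
the open disc and the exterior of the closed disc are joined inside the complement of `Φ`.
-/

section NormedSpace

open Metric

variable {E : Type*} [NormedAddCommGroup E] [NormedSpace ℝ E] {x : E} {r : ℝ}

lemma compl_closedBall_eq_image_Ioi_prod_sphere (hr : 0 ≤ r) :
    (closedBall x r)ᶜ = (fun p : ℝ × E ↦ x + p.1 • p.2) '' (Set.Ioi r ×ˢ sphere 0 1) := by
  ext y
  simp only [Set.mem_compl_iff, mem_closedBall, not_le, dist_eq_norm]
  constructor
  · intro hy
    have hy₀ : ‖y - x‖ ≠ 0 := (hr.trans_lt hy).ne'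
    refine ⟨(‖y - x‖, ‖y - x‖⁻¹ • (y - x)), ⟨hy, ?_⟩, ?_⟩
    · simp [norm_smul, hy₀]
    · simp [smul_smul, hy₀]
  · rintro ⟨⟨t, v⟩, ⟨ht : r < t, hv⟩, rfl⟩
    simpa [norm_smul, mem_sphere_zero_iff_norm.1 hv] using ht.trans_le (le_abs_self t)

lemma isPreconnected_compl_closedBall (hE : 1 < Module.rank ℝ E) :
    IsPreconnected (closedBall x r)ᶜ := by
  rcases lt_or_ge r 0 with hr | hr
  · simpa [closedBall_eq_empty.2 hr] using isPreconnected_univ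
  · rw [compl_closedBall_eq_image_Ioi_prod_sphere hr]
    exact (isPreconnected_Ioi.prod (isPreconnected_sphere hE 0 1)).image _ (by fun_prop)

lemma isPreconnected_closedBall_sdiff_of_subset_sphere {A : Set E} (hA : A ⊆ sphere x r) :
    IsPreconnected (closedBall x r \ A) := by
  rcases eq_or_ne r 0 with rfl | hr
  · rw [closedBall_zero]
    exact (Set.subsingleton_singleton.anti Set.sdiff_subset).isPreconnected
  refine isPreconnected_ball.subset_closure (s := ball x r) ?_ ?_
  · exact Set.subset_sdiff.2 ⟨ball_subset_closedBall, sphere_disjoint_ball.symm.mono_right hA⟩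
  · exact closure_ball x hr ▸ Set.sdiff_subset

lemma isPreconnected_compl_ball_sdiff_of_subset_sphere {A : Set E} (hE : 1 < Module.rank ℝ E)
    (hA : A ⊆ sphere x r) : IsPreconnected ((ball x r)ᶜ \ A) := by
  have : Nontrivial E := rank_pos_iff_nontrivial.1 (one_pos.trans hE)
  refine (isPreconnected_compl_closedBall hE).subset_closure (s := (closedBall x r)ᶜ) ?_ ?_
  · exact Set.subset_sdiff.2 ⟨Set.compl_subset_compl.2 ball_subset_closedBall,
      Set.disjoint_compl_left_iff_subset.2 (hA.trans sphere_subset_closedBall)⟩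
  · rw [closure_compl, interior_closedBall' x r]
    exact Set.sdiff_subset

theorem isConnected_compl_of_ssubset_sphere {A : Set E} (hE : 1 < Module.rank ℝ E)
    (hA : A ⊂ sphere x r) : IsConnected Aᶜ := by
  obtain ⟨p, hp, hpA⟩ := Set.exists_of_ssubset hA
  have hcover : closedBall x r \ A ∪ (ball x r)ᶜ \ A = Aᶜ := by
    have hball : closedBall x r ∪ (ball x r)ᶜ = Set.univ := by
      rw [Set.union_comm, ← Set.compl_subset_iff_union, compl_compl]
      exact ball_subset_closedBall
    rw [← Set.union_sdiff_distrib, hball, Set.compl_eq_univ_sdiff]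
  refine ⟨⟨p, hpA⟩, hcover ▸ ?_⟩
  exact (isPreconnected_closedBall_sdiff_of_subset_sphere hA.subset).union p
    ⟨sphere_subset_closedBall hp, hpA⟩ ⟨(mem_sphere.1 hp).ge.not_gt, hpA⟩
    (isPreconnected_compl_ball_sdiff_of_subset_sphere hE hA.subset)

end NormedSpace

lemma mul_cosh_add_mul_sinh_pos {a b : ℝ} (hab : |b| < a) (x : ℝ) :
    0 < a * Real.cosh x + b * Real.sinh x := by
  have hsinh : |Real.sinh x| ≤ Real.cosh x := by
    rw [Real.abs_sinh, ← Real.cosh_abs]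
    exact (Real.sinh_lt_cosh _).le
  have hlt : |b * Real.sinh x| < a * Real.cosh x := calc
    |b * Real.sinh x| = |b| * |Real.sinh x| := abs_mul _ _
    _ ≤ |b| * Real.cosh x := by gcongr
    _ < a * Real.cosh x := by gcongr
  linarith [neg_abs_le (b * Real.sinh x)]

section Phi

variable {ν Δt lam : ℝ}

lemma abs_lt_sig (hν : 0 < ν) : |lam| < sig ν lam := by
  rw [sig, Real.lt_sqrt (abs_nonneg lam), sq_abs]
  exact lt_add_of_pos_right _ (one_div_pos.2 hν)

lemma C1_ne_zero (hν : 0 < ν) (hΔt : Δt ≠ 0) : C1 ν Δt lam ≠ 0 := by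
  have hsig : sig ν lam ≠ 0 := ((abs_nonneg lam).trans_lt (abs_lt_sig hν)).ne'
  have hsinh : Real.sinh (sig ν lam * Δt) ≠ 0 := Real.sinh_ne_zero.2 (mul_ne_zero hsig hΔt)
  exact div_ne_zero (neg_ne_zero.2 (mul_ne_zero (inv_ne_zero hν.ne') hsinh))
    (mul_cosh_add_mul_sinh_pos (abs_lt_sig hν) _).ne'

lemma exists_re_eq_im_sq_eq_of_mem_PhiSet (hν : 0 ≤ ν) {z : ℂ} (hz : z ∈ PhiSet ν Δt lam) :
    ∃ θ : ℝ, z.re = C2 ν Δt lam * Real.cos θ ∧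
      z.im ^ 2 = C2 ν Δt lam ^ 2 * Real.sin θ ^ 2 + ν * C1 ν Δt lam ^ 2 := by
  obtain ⟨θ, -, ε, hε, rfl⟩ := hz
  refine ⟨θ, by simp [-Complex.ofReal_cos, -Complex.ofReal_mul], ?_⟩
  have hnonneg : 0 ≤ C2 ν Δt lam ^ 2 * Real.sin θ ^ 2 + ν * C1 ν Δt lam ^ 2 := by positivity
  simp [mul_pow, sq_eq_one_iff.2 hε, Real.sq_sqrt hnonneg]

lemma PhiSet_subset_sphere (hν : 0 ≤ ν) :
    PhiSet ν Δt lam ⊆ Metric.sphere 0 √(C2 ν Δt lam ^ 2 + ν * C1 ν Δt lam ^ 2) := by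
  intro z hz
  obtain ⟨θ, hre, him⟩ := exists_re_eq_im_sq_eq_of_mem_PhiSet hν hz
  rw [mem_sphere_zero_iff_norm, Complex.norm_eq_sqrt_sq_add_sq, hre, him]
  congr 1
  linear_combination C2 ν Δt lam ^ 2 * Real.cos_sq_add_sin_sq θ

lemma im_ne_zero_of_mem_PhiSet (hν : 0 < ν) (hΔt : Δt ≠ 0) {z : ℂ} (hz : z ∈ PhiSet ν Δt lam) :
    z.im ≠ 0 := by
  obtain ⟨θ, -, him⟩ := exists_re_eq_im_sq_eq_of_mem_PhiSet hν.le hz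
  have hC1 : C1 ν Δt lam ≠ 0 := C1_ne_zero hν hΔt
  exact sq_pos_iff.1 (him ▸ by positivity)

lemma PhiSet_ssubset_sphere (hν : 0 < ν) (hΔt : Δt ≠ 0) :
    PhiSet ν Δt lam ⊂ Metric.sphere 0 √(C2 ν Δt lam ^ 2 + ν * C1 ν Δt lam ^ 2) := by
  refine (PhiSet_subset_sphere hν.le).ssubset_of_mem_notMem
    (a := (√(C2 ν Δt lam ^ 2 + ν * C1 ν Δt lam ^ 2) : ℂ)) ?_ ?_
  · simp
  · exact fun h ↦ im_ne_zero_of_mem_PhiSet hν hΔt h (Complex.ofReal_im _)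

theorem PhiSet_compl_connected_general (ν Δt lam : ℝ) (hν : 0 < ν) (hΔt : Δt ≠ 0) :
    IsConnected (PhiSet ν Δt lam)ᶜ :=
  isConnected_compl_of_ssubset_sphere (Complex.rank_real_complex ▸ Cardinal.one_lt_two)
    (PhiSet_ssubset_sphere hν hΔt)

end Phi

/-- since C₁ ≠ 0 for positive parameters, the complement ℂ \ Φ is
connected: Φ does not disconnect the complex plane. -/
theorem PhiSet_compl_connected (ν Δt lam : ℝ)
    (hν : 0 < ν) (hΔt : 0 < Δt) (hlam : 0 < lam) :
    IsConnected ((PhiSet ν Δt lam)ᶜ) :=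
  PhiSet_compl_connected_general ν Δt lam hν hΔt.ne'
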